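/- Let L, T, τ > 0. Let q₀, q₁, q₂, q₃ : [0,T] × ℝ → ℝ be C¹ functions, L-periodic in x, satisfying ∂_t q₀ + ∂_x (q₀²/2) + q₂ + ∂_x q₃ = 0, τ ∂_t q₁ − (∂_x q₂ − q₃) = 0, τ ∂_t q₂ − (∂_x q₁ − q₂) = 0, and τ ∂_t q₃ + (∂_x q₀ − q₁) = 0 on [0,T] × ℝ. Then the energy η(q)(t) = ∫₀^L ( ½ q₀(t,x)² + (τ/2)(q₁(t,x)² + q₂(t,x)² + q₃(t,x)²) ) dx satisfies, for all t ∈ [0,T], d/dt η(q)(t) = ∫₀^L ( −q₀ q₂ − q₂² )(t,x) dx ≤ (1/4) ∫₀^L q₀(t,x)² dx. -/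

import Mathlib

open MeasureTheory

/-- Partial derivative with respect to the first (time) variable. -/
noncomputable def pdt (u : ℝ → ℝ → ℝ) : ℝ → ℝ → ℝ :=
  fun t x => deriv (fun s => u s x) t

/-- Partial derivative with respect to the second (space) variable. -/
noncomputable def pdx (u : ℝ → ℝ → ℝ) : ℝ → ℝ → ℝ :=
  fun t x => deriv (fun y => u t y) x

lemma hasDerivAt_pdt {u : ℝ → ℝ → ℝ} (hu : ContDiff ℝ 1 (Function.uncurry u)) (t x : ℝ) :
    HasDerivAt (fun s => u s x) (pdt u t x) t := by
  have h : Differentiable ℝ fun s => Function.uncurry u (s, x) :=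
    (hu.differentiable one_ne_zero).comp (by fun_prop)
  exact (h t).hasDerivAt

lemma hasDerivAt_pdx {u : ℝ → ℝ → ℝ} (hu : ContDiff ℝ 1 (Function.uncurry u)) (t x : ℝ) :
    HasDerivAt (fun y => u t y) (pdx u t x) x := by
  have h : Differentiable ℝ fun y => Function.uncurry u (t, y) :=
    (hu.differentiable one_ne_zero).comp (by fun_prop)
  exact (h x).hasDerivAt

lemma continuous_uncurry_pdt {u : ℝ → ℝ → ℝ} (hu : ContDiff ℝ 1 (Function.uncurry u)) :
    Continuous (Function.uncurry (pdt u)) := by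
  have h : Function.uncurry (pdt u) = fun p => fderiv ℝ (Function.uncurry u) p (1, 0) := by
    ext ⟨t, x⟩
    exact ((hu.differentiable one_ne_zero (t, x)).hasFDerivAt.comp_hasDerivAt t
      ((hasDerivAt_id t).prodMk (hasDerivAt_const t x))).deriv
  rw [h]
  exact (hu.continuous_fderiv one_ne_zero).clm_apply continuous_const

lemma continuous_pdx {u : ℝ → ℝ → ℝ} (hu : ContDiff ℝ 1 (Function.uncurry u)) (t : ℝ) :
    Continuous (pdx u t) := by
  have h : ContDiff ℝ 1 fun y => Function.uncurry u (t, y) := hu.comp (by fun_prop)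
  exact h.continuous_deriv le_rfl

/-- Differentiation under the integral sign for a `C¹` integrand on a bounded interval. -/
lemma hasDerivAt_intervalIntegral_pdt {u : ℝ → ℝ → ℝ}
    (hu : ContDiff ℝ 1 (Function.uncurry u)) (a b t : ℝ) :
    HasDerivAt (fun s => ∫ x in a..b, u s x) (∫ x in a..b, pdt u t x) t := by
  have hc := continuous_uncurry_pdt hu
  have hcu (s : ℝ) : Continuous (u s) := hu.continuous.comp (Continuous.prodMk_right s)
  obtain ⟨C, hC⟩ := ((isCompact_closedBall t 1).prod
    (isCompact_uIcc (a := a) (b := b))).exists_bound_of_continuousOn hc.continuousOn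
  refine (intervalIntegral.hasDerivAt_integral_of_dominated_loc_of_deriv_le
    (bound := fun _ => C) (Metric.closedBall_mem_nhds t one_pos)
    (.of_forall fun s => (hcu s).aestronglyMeasurable) ((hcu t).intervalIntegrable _ _)
    (hc.comp (Continuous.prodMk_right t)).aestronglyMeasurable
    (.of_forall fun x hx s hs => hC (s, x) ⟨hs, Set.uIoc_subset_uIcc hx⟩)
    intervalIntegrable_const
    (.of_forall fun x _ s _ => hasDerivAt_pdt hu s x)).2

/-- The derivative of a periodic function integrates to zero over a period. -/
lemma Function.Periodic.intervalIntegral_deriv_eq_zero {f f' : ℝ → ℝ} {L : ℝ}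
    (hper : Function.Periodic f L) (hf : ∀ x, HasDerivAt f (f' x) x) (hf' : Continuous f') :
    ∫ x in (0:ℝ)..L, f' x = 0 := by
  rw [intervalIntegral.integral_eq_sub_of_hasDerivAt (fun x _ => hf x)
    (hf'.intervalIntegrable _ _), hper.eq, sub_self]

/-- Controlled energy growth for the hyperbolic approximation of the
Kuramoto–Sivashinsky equation:
`d/dt η(q)(t) = ∫₀^L (-q₀ q₂ - q₂²) dx ≤ (1/4) ∫₀^L q₀² dx`. -/
theorem kuramoto_sivashinsky_hyperbolic_energy_growth
    (L T τ : ℝ) (hL : 0 < L) (hT : 0 < T) (hτ : 0 < τ)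
    (q₀ q₁ q₂ q₃ : ℝ → ℝ → ℝ)
    (hq₀ : ContDiff ℝ 1 (Function.uncurry q₀))
    (hq₁ : ContDiff ℝ 1 (Function.uncurry q₁))
    (hq₂ : ContDiff ℝ 1 (Function.uncurry q₂))
    (hq₃ : ContDiff ℝ 1 (Function.uncurry q₃))
    (hper₀ : ∀ t, Function.Periodic (q₀ t) L)
    (hper₁ : ∀ t, Function.Periodic (q₁ t) L)
    (hper₂ : ∀ t, Function.Periodic (q₂ t) L)
    (hper₃ : ∀ t, Function.Periodic (q₃ t) L)
    (heq₀ : ∀ t ∈ Set.Icc (0:ℝ) T, ∀ x : ℝ,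
      pdt q₀ t x + pdx (fun s y => q₀ s y ^ 2 / 2) t x + q₂ t x + pdx q₃ t x = 0)
    (heq₁ : ∀ t ∈ Set.Icc (0:ℝ) T, ∀ x : ℝ,
      τ * pdt q₁ t x - (pdx q₂ t x - q₃ t x) = 0)
    (heq₂ : ∀ t ∈ Set.Icc (0:ℝ) T, ∀ x : ℝ,
      τ * pdt q₂ t x - (pdx q₁ t x - q₂ t x) = 0)
    (heq₃ : ∀ t ∈ Set.Icc (0:ℝ) T, ∀ x : ℝ,
      τ * pdt q₃ t x + (pdx q₀ t x - q₁ t x) = 0) :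
    ∀ t ∈ Set.Icc (0:ℝ) T,
      HasDerivWithinAt
        (fun s => ∫ x in (0:ℝ)..L,
          (q₀ s x ^ 2 / 2 + τ / 2 * (q₁ s x ^ 2 + q₂ s x ^ 2 + q₃ s x ^ 2)))
        (∫ x in (0:ℝ)..L, (- q₀ t x * q₂ t x - q₂ t x ^ 2))
        (Set.Icc (0:ℝ) T) t ∧
      (∫ x in (0:ℝ)..L, (- q₀ t x * q₂ t x - q₂ t x ^ 2))
        ≤ (1 / 4) * ∫ x in (0:ℝ)..L, q₀ t x ^ 2 := by
  intro t ht
  have hc {u : ℝ → ℝ → ℝ} (hu : ContDiff ℝ 1 (Function.uncurry u)) : Continuous (u t) :=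
    hu.continuous.comp (Continuous.prodMk_right t)
  have c₀ := hc hq₀
  have c₁ := hc hq₁
  have c₂ := hc hq₂
  have c₃ := hc hq₃
  constructor
  · have hη : ContDiff ℝ 1 (Function.uncurry fun s x =>
        q₀ s x ^ 2 / 2 + τ / 2 * (q₁ s x ^ 2 + q₂ s x ^ 2 + q₃ s x ^ 2)) :=
      ((hq₀.pow 2).div_const 2).add
        (contDiff_const.mul (((hq₁.pow 2).add (hq₂.pow 2)).add (hq₃.pow 2)))
    -- the entropy flux and its spatial derivative
    let flux : ℝ → ℝ := fun x => q₁ t x * q₂ t x - q₀ t x ^ 3 / 3 - q₀ t x * q₃ t x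
    let flux' : ℝ → ℝ := fun x => pdx q₁ t x * q₂ t x + q₁ t x * pdx q₂ t x
      - q₀ t x ^ 2 * pdx q₀ t x - (pdx q₀ t x * q₃ t x + q₀ t x * pdx q₃ t x)
    have hflux (x : ℝ) : HasDerivAt flux (flux' x) x := by
      have d₀ := hasDerivAt_pdx hq₀ t x
      refine ((((hasDerivAt_pdx hq₁ t x).mul (hasDerivAt_pdx hq₂ t x)).sub
        ((d₀.pow 3).div_const 3)).sub (d₀.mul (hasDerivAt_pdx hq₃ t x))).congr_deriv ?_
      simp only [flux']
      norm_num
      ring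
    have hflux_cont : Continuous flux' := by
      have p₀ := continuous_pdx hq₀ t
      have p₁ := continuous_pdx hq₁ t
      have p₂ := continuous_pdx hq₂ t
      have p₃ := continuous_pdx hq₃ t
      fun_prop
    have hflux_per : Function.Periodic flux L := fun x => by
      simp only [flux, hper₀ t x, hper₁ t x, hper₂ t x, hper₃ t x]
    have hpdt (x : ℝ) :
        pdt (fun s x => q₀ s x ^ 2 / 2 + τ / 2 * (q₁ s x ^ 2 + q₂ s x ^ 2 + q₃ s x ^ 2)) t x
          = (- q₀ t x * q₂ t x - q₂ t x ^ 2) + flux' x := by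
      have hd := ((((hasDerivAt_pdt hq₀ t x).pow 2).div_const 2).add
        (((((hasDerivAt_pdt hq₁ t x).pow 2).add ((hasDerivAt_pdt hq₂ t x).pow 2)).add
          ((hasDerivAt_pdt hq₃ t x).pow 2)).const_mul (τ / 2)))
      have hburgers : pdx (fun s y => q₀ s y ^ 2 / 2) t x = q₀ t x * pdx q₀ t x := by
        refine ((((hasDerivAt_pdx hq₀ t x).pow 2).div_const 2).congr_deriv ?_).deriv
        norm_num
        ring
      have e₀ := heq₀ t ht x
      rw [hburgers] at e₀
      refine (hd.congr_deriv ?_).deriv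
      simp only [flux']
      norm_num
      linear_combination q₀ t x * e₀ + q₁ t x * heq₁ t ht x + q₂ t x * heq₂ t ht x
        + q₃ t x * heq₃ t ht x
    refine ((hasDerivAt_intervalIntegral_pdt hη 0 L t).congr_deriv ?_).hasDerivWithinAt
    simp only [hpdt]
    rw [intervalIntegral.integral_add
      (Continuous.intervalIntegrable (by fun_prop) _ _) (hflux_cont.intervalIntegrable _ _),
      hflux_per.intervalIntegral_deriv_eq_zero hflux hflux_cont, add_zero]
  · rw [← intervalIntegral.integral_const_mul]
    refine intervalIntegral.integral_mono_on hL.le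
      (Continuous.intervalIntegrable (by fun_prop) _ _)
      (Continuous.intervalIntegrable (by fun_prop) _ _) fun x _ => ?_
    nlinarith [sq_nonneg (q₀ t x / 2 + q₂ t x)]
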